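/- (AKT lower bound, d = 2.) Let X_1,…,X_n, Y_1,…,Y_n be independent random variables with the uniform distribution dμ = dx/(2π)² on Q² = (−π,π]², and let μ_n = (1/n)Σ_{k=1}^n δ_{X_k}, ν_n = (1/n)Σ_{k=1}^n δ_{Y_k}. There exists an absolute constant c > 0 such that for every n ≥ 2, E( W̃₁(μ_n, ν_n) ) ≥ c·√(log n / n). -/

import Mathlib

open MeasureTheory ProbabilityTheory Real ENNReal

noncomputable section

/-- The square `Q² = (−π, π]²`. -/
def Qsquare : Set (Fin 2 → ℝ) := {x | ∀ i, x i ∈ Set.Ioc (-π) π}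

/-- The uniform distribution `dx/(2π)²` on `Q²`. -/
def uniformQsquare : Measure (Fin 2 → ℝ) :=
  (ENNReal.ofReal ((2 * π) ^ 2))⁻¹ • volume.restrict Qsquare

/-- The one-dimensional torus distance on `(−π,π]`. -/
def rhoCircle (s t : ℝ) : ℝ := min |s - t| (2 * π - |s - t|)

/-- The geodesic distance on the torus `Q² = (−π,π]²`. -/
def rhoTorus (x y : Fin 2 → ℝ) : ℝ :=
  Real.sqrt (∑ i, rhoCircle (x i) (y i) ^ 2)

/-- `γ` is a coupling of `μ` and `ν`. -/
def IsCoupling {α : Type*} [MeasurableSpace α]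
    (γ : Measure (α × α)) (μ ν : Measure α) : Prop :=
  γ.map Prod.fst = μ ∧ γ.map Prod.snd = ν

/-- Torus Kantorovich distance `W̃₁` on `Q²`. -/
def W1tilde (μ ν : Measure (Fin 2 → ℝ)) : ℝ≥0∞ :=
  ⨅ (γ : Measure ((Fin 2 → ℝ) × (Fin 2 → ℝ))) (_ : IsCoupling γ μ ν),
    ∫⁻ p, ENNReal.ofReal (rhoTorus p.1 p.2) ∂γ

/-- The empirical measure `(1/n) Σ_k δ_{X_k(ω)}`. -/
def empMeasure {n : ℕ} {Ω : Type*} [MeasurableSpace Ω]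
    (X : Fin n → Ω → (Fin 2 → ℝ)) (ω : Ω) : Measure (Fin 2 → ℝ) :=
  (n : ℝ≥0∞)⁻¹ • ∑ k, Measure.dirac (X k ω)

section

def th (k : ℕ) (t : ℝ) : ℝ := 2 ^ k * (t + π)

def idx (k : ℕ) (x : Fin 2 → ℝ) : Fin 2 → ℤ := fun i => ⌊th k (x i) / (2 * π)⌋

def grid (k : ℕ) : Finset (Fin 2 → ℤ) := Fintype.piFinset fun _ => Finset.Ico (0 : ℤ) (2 ^ k)

def cell (k : ℕ) (a : Fin 2 → ℤ) : Set (Fin 2 → ℝ) := {x | idx k x = a}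

def lo (k : ℕ) (m : ℤ) : ℝ := -π + 2 * π * m / 2 ^ k

lemma two_pi_pos' : 0 < 2 * π := by positivity

lemma card_grid (k : ℕ) : (grid k).card = 4 ^ k := by
  simp [grid, Fintype.card_piFinset]
  have : ((2 : ℤ) ^ k).toNat = 2 ^ k := by
    have : ((2 : ℤ) ^ k) = ((2 ^ k : ℕ) : ℤ) := by push_cast; rfl
    rw [this, Int.toNat_natCast]
  rw [this, ← pow_mul, mul_comm, pow_mul]; norm_num

lemma floor_iff (k : ℕ) (t : ℝ) (m : ℤ) :
    ⌊th k t / (2 * π)⌋ = m ↔ t ∈ Set.Ico (lo k m) (lo k (m + 1)) := by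
  have hp := two_pi_pos'
  have h2 : (0 : ℝ) < 2 ^ k := by positivity
  rw [Int.floor_eq_iff, Set.mem_Ico, le_div_iff₀ hp, div_lt_iff₀ hp]
  unfold th lo
  push_cast
  rw [neg_add_le_iff_le_add, lt_neg_add_iff_add_lt, div_le_iff₀ h2, lt_div_iff₀ h2]
  constructor <;> rintro ⟨h, h'⟩ <;> constructor <;> linarith

lemma cell_eq (k : ℕ) (a : Fin 2 → ℤ) :
    cell k a = Set.pi Set.univ (fun i => Set.Ico (lo k (a i)) (lo k (a i + 1))) := by
  ext x
  simp only [cell, Set.mem_ofPred_eq, Set.mem_pi, Set.mem_univ, true_implies, ← floor_iff]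
  exact funext_iff

lemma measurable_idx (k : ℕ) : Measurable (idx k) := by
  unfold idx th
  fun_prop

lemma measurableSet_cell (k : ℕ) (a : Fin 2 → ℤ) : MeasurableSet (cell k a) :=
  measurable_idx k (measurableSet_singleton a)

lemma Qsquare_eq : Qsquare = Set.pi Set.univ (fun _ : Fin 2 => Set.Ioc (-π) π) := by
  ext x; simp [Qsquare]

lemma lo_bounds {k : ℕ} {a : Fin 2 → ℤ} (ha : a ∈ grid k) (i : Fin 2) :
    -π ≤ lo k (a i) ∧ lo k (a i) ≤ lo k (a i + 1) ∧ lo k (a i + 1) ≤ π := by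
  have h2 : (0 : ℝ) < 2 ^ k := by positivity
  have h := (Fintype.mem_piFinset.1 ha) i
  rw [Finset.mem_Ico] at h
  have h0 : (0 : ℝ) ≤ a i := by exact_mod_cast h.1
  have h1 : (a i : ℝ) + 1 ≤ 2 ^ k := by exact_mod_cast h.2
  have hp := pi_pos
  unfold lo
  push_cast
  refine ⟨?_, ?_, ?_⟩
  · have : 0 ≤ 2 * π * (a i : ℝ) / 2 ^ k := by positivity
    linarith
  · gcongr; linarith
  · have : 2 * π * ((a i : ℝ) + 1) / 2 ^ k ≤ 2 * π := by
      rw [div_le_iff₀ h2]; gcongr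
    linarith

lemma restrict_cell {k : ℕ} {a : Fin 2 → ℤ} (ha : a ∈ grid k) :
    uniformQsquare.restrict (cell k a) = (ENNReal.ofReal ((2 * π) ^ 2))⁻¹ •
      Measure.pi (fun i => (volume : Measure ℝ).restrict
        (Set.Ioc (lo k (a i)) (lo k (a i + 1)))) := by
  rw [uniformQsquare, Measure.restrict_smul, Qsquare_eq, cell_eq, volume_pi,
    Measure.restrict_pi_pi, Measure.restrict_pi_pi]
  congr 2
  ext1 i
  obtain ⟨h1, h2, h3⟩ := lo_bounds ha i
  rw [Measure.restrict_congr_set Ico_ae_eq_Ioc, Measure.restrict_restrict measurableSet_Ioc]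
  congr 1
  exact Set.inter_eq_left.2 (Set.Ioc_subset_Ioc h1 h3)

lemma int_one (k : ℕ) (m : ℤ) (p : ℝ → ℝ) (hp : Function.Periodic p (2 * π)) :
    ∫ t in lo k m..lo k (m + 1), p (th k t) = (2 ^ k)⁻¹ * ∫ t in (0 : ℝ)..2 * π, p t := by
  have h2 : (2 : ℝ) ^ k ≠ 0 := by positivity
  have e : ∀ t, th k t = 2 ^ k * t + 2 ^ k * π := fun t => by unfold th; ring
  simp_rw [e]
  rw [intervalIntegral.integral_comp_mul_add _ h2]
  have e1 : (2 : ℝ) ^ k * lo k m + 2 ^ k * π = 2 * π * m := by unfold lo; field_simp; ring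
  have e2 : (2 : ℝ) ^ k * lo k (m + 1) + 2 ^ k * π = 2 * π * m + 2 * π := by
    unfold lo; push_cast; field_simp; ring
  rw [e1, e2, hp.intervalIntegral_add_eq (2 * π * m) 0, zero_add, smul_eq_mul]

lemma int_cell {k : ℕ} {a : Fin 2 → ℤ} (ha : a ∈ grid k) (p q : ℝ → ℝ)
    (hp : Function.Periodic p (2 * π)) (hq : Function.Periodic q (2 * π)) :
    ∫ x in cell k a, p (th k (x 0)) * q (th k (x 1)) ∂uniformQsquare
      = (4 ^ k)⁻¹ * (((2 * π)⁻¹ * ∫ t in (0 : ℝ)..2 * π, p t) *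
          ((2 * π)⁻¹ * ∫ t in (0 : ℝ)..2 * π, q t)) := by
  rw [restrict_cell ha, integral_smul_measure]
  have := integral_fintype_prod_eq_prod (𝕜 := ℝ) (μ := fun i => (volume : Measure ℝ).restrict
        (Set.Ioc (lo k (a i)) (lo k (a i + 1)))) (fun i t => (![p, q] i) (th k t))
  simp only [Fin.prod_univ_two, Matrix.cons_val_zero, Matrix.cons_val_one] at this
  rw [this]
  rw [← intervalIntegral.integral_of_le (lo_bounds ha 0).2.1,
    ← intervalIntegral.integral_of_le (lo_bounds ha 1).2.1, int_one _ _ _ hp, int_one _ _ _ hq]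
  rw [ENNReal.toReal_inv, ENNReal.toReal_ofReal (by positivity), smul_eq_mul]
  have : (4 : ℝ) ^ k = 2 ^ k * 2 ^ k := by rw [← mul_pow]; norm_num
  rw [this]
  field_simp

instance : IsProbabilityMeasure uniformQsquare := by
  constructor
  rw [uniformQsquare, Measure.smul_apply, Measure.restrict_apply_univ, Qsquare_eq, volume_pi_pi]
  simp only [Real.volume_Ioc, Finset.prod_const, Finset.card_univ, Fintype.card_fin, smul_eq_mul]
  rw [← ENNReal.ofReal_pow (by linarith [pi_pos])]
  rw [show π - -π = 2 * π by ring]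
  exact ENNReal.inv_mul_cancel (by simp) (by simp)

lemma real_cell {k : ℕ} {a : Fin 2 → ℤ} (ha : a ∈ grid k) :
    uniformQsquare.real (cell k a) = (4 ^ k)⁻¹ := by
  have := int_cell ha (fun _ => 1) (fun _ => 1) (fun _ => rfl) (fun _ => rfl)
  simp at this
  rw [Measure.real] at this ⊢
  rw [this]
  field_simp

lemma idx_mono {j k : ℕ} (h : j ≤ k) {x y : Fin 2 → ℝ} (hxy : idx k x = idx k y) :
    idx j x = idx j y := by
  obtain ⟨m, rfl⟩ := Nat.exists_eq_add_of_le h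
  have key : ∀ t, ⌊th j t / (2 * π)⌋ = ⌊th (j + m) t / (2 * π)⌋ / ((2 ^ m : ℕ) : ℤ) := by
    intro t
    rw [← Int.floor_div_natCast]
    congr 1
    unfold th
    push_cast
    rw [pow_add]
    field_simp
  funext i
  have := congrFun hxy i
  simp only [idx] at this ⊢
  rw [key, key, this]

lemma ae_mem_grid (k : ℕ) : ∀ᵐ x ∂uniformQsquare, idx k x ∈ grid k := by
  have hm : MeasurableSet (⋃ a ∈ grid k, cell k a) :=
    Finset.measurableSet_biUnion _ fun a _ => measurableSet_cell k a
  have : uniformQsquare.real (⋃ a ∈ grid k, cell k a) = 1 := by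
    rw [measureReal_biUnion_finset]
    · rw [Finset.sum_congr rfl fun a ha => real_cell ha]
      simp [card_grid]
    · intro a _ b _ hab
      exact Set.disjoint_left.2 fun x hx hx' => hab (hx.symm.trans hx')
    · exact fun a _ => measurableSet_cell k a
  have h1 : uniformQsquare (⋃ a ∈ grid k, cell k a) = 1 := by
    rw [Measure.real] at this
    rw [← ENNReal.ofReal_toReal (measure_ne_top uniformQsquare _), this]; simp
  have := (mem_ae_iff_prob_eq_one hm).2 h1
  filter_upwards [this] with x hx
  simp only [Set.mem_iUnion] at hx
  obtain ⟨a, ha, hx⟩ := hx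
  rw [show idx k x = a from hx]; exact ha

lemma integral_eq_sum_cells (k : ℕ) (F : (Fin 2 → ℝ) → ℝ) (hF : Integrable F uniformQsquare) :
    ∫ x, F x ∂uniformQsquare = ∑ a ∈ grid k, ∫ x in cell k a, F x ∂uniformQsquare := by
  rw [← integral_biUnion_finset]
  · rw [← setIntegral_univ]
    refine (setIntegral_congr_set ?_).symm
    refine Filter.eventuallyEq_univ.2 ?_
    filter_upwards [ae_mem_grid k] with x hx
    simp only [Set.mem_iUnion]
    exact ⟨_, hx, rfl⟩
  · exact fun a _ => measurableSet_cell k a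
  · intro a _ b _ hab
    exact Set.disjoint_left.2 fun x hx hx' => hab (hx.symm.trans hx')
  · exact fun a _ => hF.integrableOn

end

section

set_option linter.unusedSimpArgs false

def gp : Fin 2 → ℝ → ℝ := ![cos, sin]
def gq : Fin 2 → ℝ → ℝ := ![sin, cos]

def GG (i : Fin 2) (k : ℕ) (x : Fin 2 → ℝ) : ℝ := gp i (th k (x 0)) * gq i (th k (x 1))

def SS (k : ℕ) (x : Fin 2 → ℝ) : ℝ := sin (th k (x 0)) * sin (th k (x 1))

open Classical in
def zc (L : ℝ) (sg : ℕ → (Fin 2 → ℤ) → ℝ) (k : ℕ) (D : (Fin 2 → ℝ) → Fin 2 → ℝ)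
    (c : Fin 2 → ℤ) : ℝ :=
  if ∃ x i, idx k x = c ∧ L < |D x i| then 0 else sg k c

def DD (L : ℝ) (sg : ℕ → (Fin 2 → ℤ) → ℝ) : ℕ → (Fin 2 → ℝ) → Fin 2 → ℝ
  | 0 => fun _ _ => 0
  | k + 1 => fun x i => DD L sg k x i + zc L sg k (DD L sg k) (idx k x) * GG i k x

def zz (L : ℝ) (sg : ℕ → (Fin 2 → ℤ) → ℝ) (k : ℕ) (c : Fin 2 → ℤ) : ℝ :=
  zc L sg k (DD L sg k) c

def Bad (L : ℝ) (sg : ℕ → (Fin 2 → ℤ) → ℝ) (k : ℕ) (c : Fin 2 → ℤ) : Prop :=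
  ∃ x i, idx k x = c ∧ L < |DD L sg k x i|

lemma gp_lip (i : Fin 2) (s t : ℝ) : |gp i s - gp i t| ≤ |s - t| := by
  fin_cases i
  · simpa [gp, Real.dist_eq] using Real.lipschitzWith_cos.dist_le_mul s t
  · simpa [gp, Real.dist_eq] using Real.lipschitzWith_sin.dist_le_mul s t

lemma gq_lip (i : Fin 2) (s t : ℝ) : |gq i s - gq i t| ≤ |s - t| := by
  fin_cases i
  · simpa [gq, Real.dist_eq] using Real.lipschitzWith_sin.dist_le_mul s t
  · simpa [gq, Real.dist_eq] using Real.lipschitzWith_cos.dist_le_mul s t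

lemma gp_le (i : Fin 2) (s : ℝ) : |gp i s| ≤ 1 := by
  fin_cases i <;> simp [gp, abs_cos_le_one, abs_sin_le_one]

lemma gq_le (i : Fin 2) (s : ℝ) : |gq i s| ≤ 1 := by
  fin_cases i <;> simp [gq, abs_cos_le_one, abs_sin_le_one]

lemma gp_cont (i : Fin 2) : Continuous (gp i) := by
  fin_cases i <;> simp [gp, continuous_cos, continuous_sin]

lemma gq_cont (i : Fin 2) : Continuous (gq i) := by
  fin_cases i <;> simp [gq, continuous_cos, continuous_sin]

lemma GG_le (i : Fin 2) (k : ℕ) (x) : |GG i k x| ≤ 1 := by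
  unfold GG; rw [abs_mul]
  exact mul_le_one₀ (gp_le _ _) (abs_nonneg _) (gq_le _ _)

lemma SS_le (k : ℕ) (x) : |SS k x| ≤ 1 := by
  unfold SS; rw [abs_mul]
  exact mul_le_one₀ (abs_sin_le_one _) (abs_nonneg _) (abs_sin_le_one _)

lemma th_cont (k : ℕ) : Continuous (th k) := by unfold th; fun_prop

lemma GG_cont (i : Fin 2) (k : ℕ) : Continuous (GG i k) := by
  unfold GG
  have := gp_cont i
  have := gq_cont i
  have := th_cont k
  fun_prop

lemma SS_cont (k : ℕ) : Continuous (SS k) := by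
  unfold SS
  have := th_cont k
  fun_prop

lemma GG_osc (i : Fin 2) {j k : ℕ} {x y : Fin 2 → ℝ} (h : idx k x = idx k y) :
    |GG i j x - GG i j y| ≤ 4 * π * (2 ^ j / 2 ^ k) := by
  have hc : ∀ l, |th j (x l) - th j (y l)| ≤ 2 * π * (2 ^ j / 2 ^ k) := by
    intro l
    have h1 := (floor_iff k (x l) (idx k x l)).1 rfl
    have h2 := (floor_iff k (y l) (idx k x l)).1 (by rw [h]; rfl)
    have e : lo k (idx k x l + 1) = lo k (idx k x l) + 2 * π / 2 ^ k := by
      unfold lo; push_cast; ring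
    rw [e] at h1 h2
    have : |x l - y l| ≤ 2 * π / 2 ^ k := by
      rw [abs_le]; constructor <;> linarith [h1.1, h1.2, h2.1, h2.2]
    have e2 : th j (x l) - th j (y l) = 2 ^ j * (x l - y l) := by unfold th; ring
    rw [e2, abs_mul, abs_of_pos (by positivity : (0 : ℝ) < 2 ^ j)]
    calc (2 : ℝ) ^ j * |x l - y l| ≤ 2 ^ j * (2 * π / 2 ^ k) := by gcongr
      _ = _ := by ring
  have e : GG i j x - GG i j y = (gp i (th j (x 0)) - gp i (th j (y 0))) * gq i (th j (x 1))
      + gp i (th j (y 0)) * (gq i (th j (x 1)) - gq i (th j (y 1))) := by unfold GG; ring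
  rw [e]
  refine (abs_add_le _ _).trans ?_
  rw [abs_mul, abs_mul]
  have a1 := (gp_lip i (th j (x 0)) (th j (y 0))).trans (hc 0)
  have a2 := (gq_lip i (th j (x 1)) (th j (y 1))).trans (hc 1)
  have b1 := gq_le i (th j (x 1))
  have b2 := gp_le i (th j (y 0))
  have c1 := mul_le_mul a1 b1 (abs_nonneg _) (by positivity)
  have c2 := mul_le_mul b2 a2 (abs_nonneg _) (by positivity)
  linarith

lemma gp_per (i : Fin 2) : Function.Periodic (gp i) (2 * π) := by
  fin_cases i <;> simp [gp, sin_periodic, cos_periodic]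

lemma gq_per (i : Fin 2) : Function.Periodic (gq i) (2 * π) := by
  fin_cases i <;> simp [gq, sin_periodic, cos_periodic]

lemma GG_mean (i : Fin 2) {k : ℕ} {a : Fin 2 → ℤ} (ha : a ∈ grid k) :
    ∫ x in cell k a, GG i k x ∂uniformQsquare = 0 := by
  unfold GG
  rw [int_cell ha _ _ (gp_per i) (gq_per i)]
  fin_cases i <;> simp [gp, gq]

lemma SS_mean {k : ℕ} {a : Fin 2 → ℤ} (ha : a ∈ grid k) :
    ∫ x in cell k a, SS k x ∂uniformQsquare = 0 := by
  unfold SS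
  rw [int_cell ha _ _ sin_periodic sin_periodic]
  simp

lemma SS_sq {k : ℕ} {a : Fin 2 → ℤ} (ha : a ∈ grid k) :
    ∫ x in cell k a, SS k x ^ 2 ∂uniformQsquare = (4 ^ k)⁻¹ / 4 := by
  unfold SS
  have hper : Function.Periodic (fun t => sin t ^ 2) (2 * π) := fun t => by simp [sin_periodic t]
  simp_rw [mul_pow]
  rw [int_cell ha _ _ hper hper]
  simp [integral_sin_sq]
  field_simp
  norm_num

variable {L : ℝ} {sg : ℕ → (Fin 2 → ℤ) → ℝ}

lemma zz_bad {k : ℕ} {c : Fin 2 → ℤ} (h : Bad L sg k c) : zz L sg k c = 0 := if_pos h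
lemma zz_good {k : ℕ} {c : Fin 2 → ℤ} (h : ¬ Bad L sg k c) : zz L sg k c = sg k c := if_neg h

lemma zz_le (hsg : ∀ k c, |sg k c| ≤ 1) (k : ℕ) (c : Fin 2 → ℤ) : |zz L sg k c| ≤ 1 := by
  by_cases h : Bad L sg k c
  · rw [zz_bad h]; simp
  · rw [zz_good h]; exact hsg _ _

lemma DD_succ (k : ℕ) (x) (i) :
    DD L sg (k + 1) x i = DD L sg k x i + zz L sg k (idx k x) * GG i k x := rfl

lemma DD_sum (k : ℕ) (x) (i) :
    DD L sg k x i = ∑ j ∈ Finset.range k, zz L sg j (idx j x) * GG i j x := by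
  induction k with
  | zero => rfl
  | succ k ih => rw [DD_succ, ih, Finset.sum_range_succ]

lemma DD_meas (k : ℕ) (i) : Measurable (fun x => DD L sg k x i) := by
  simp_rw [DD_sum]
  refine Finset.measurable_sum _ fun j _ => Measurable.mul ?_ (GG_cont i j).measurable
  exact (measurable_of_countable (zz L sg j)).comp (measurable_idx j)

lemma DD_le (hL : 0 ≤ L) (hsg : ∀ k c, |sg k c| ≤ 1) (k : ℕ) (x) (i) :
    |DD L sg k x i| ≤ L + 1 := by
  induction k with
  | zero => simp [DD]; linarith
  | succ k ih =>
    rw [DD_succ]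
    by_cases h : Bad L sg k (idx k x)
    · rw [zz_bad h]; simpa using ih
    · have h2 : |DD L sg k x i| ≤ L := by
        by_contra h3
        exact h ⟨x, i, rfl, not_le.1 h3⟩
      have h3 : |zz L sg k (idx k x) * GG i k x| ≤ 1 := by
        rw [abs_mul]
        exact mul_le_one₀ (zz_le hsg _ _) (abs_nonneg _) (GG_le _ _ _)
      exact (abs_add_le _ _).trans (add_le_add h2 h3)

lemma DD_osc (hsg : ∀ k c, |sg k c| ≤ 1) (k : ℕ) {x y} (i) (h : idx k x = idx k y) :
    |DD L sg k x i - DD L sg k y i| ≤ 4 * π := by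
  rw [DD_sum, DD_sum, ← Finset.sum_sub_distrib]
  refine (Finset.abs_sum_le_sum_abs _ _).trans ?_
  have h1 : ∀ j ∈ Finset.range k, |zz L sg j (idx j x) * GG i j x - zz L sg j (idx j y) * GG i j y|
      ≤ 4 * π * (2 ^ j / 2 ^ k) := by
    intro j hj
    rw [idx_mono (Finset.mem_range.1 hj).le h, ← mul_sub, abs_mul]
    have := mul_le_mul (zz_le (L := L) hsg j (idx j y)) (GG_osc i (j := j) h) (abs_nonneg _) (by norm_num)
    linarith
  refine (Finset.sum_le_sum h1).trans ?_
  rw [← Finset.mul_sum, ← Finset.sum_div]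
  have : ∑ j ∈ Finset.range k, (2 : ℝ) ^ j ≤ 2 ^ k := by
    rw [geom_sum_eq (by norm_num)]; norm_num
  have h2 : (∑ j ∈ Finset.range k, (2 : ℝ) ^ j) / 2 ^ k ≤ 1 := by
    rw [div_le_one (by positivity)]; exact this
  nlinarith [pi_pos]

lemma DD_int (hL : 0 ≤ L) (hsg : ∀ k c, |sg k c| ≤ 1) (k : ℕ) (i) (s : Set (Fin 2 → ℝ)) :
    Integrable (fun x => DD L sg k x i) (uniformQsquare.restrict s) :=
  Integrable.of_bound (DD_meas k i).aestronglyMeasurable (L + 1)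
    (.of_forall fun x => DD_le hL hsg k x i)

lemma DDsq_int (hL : 0 ≤ L) (hsg : ∀ k c, |sg k c| ≤ 1) (k : ℕ) (i) :
    Integrable (fun x => DD L sg k x i ^ 2) (uniformQsquare) :=
  Integrable.of_bound ((DD_meas k i).pow_const 2).aestronglyMeasurable ((L + 1) ^ 2)
    (.of_forall fun x => by
      rw [Real.norm_eq_abs, abs_pow]
      exact pow_le_pow_left₀ (abs_nonneg _) (DD_le hL hsg k x i) 2)

lemma GG_int (k : ℕ) (i) (s : Set (Fin 2 → ℝ)) :
    Integrable (GG i k) (uniformQsquare.restrict s) :=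
  Integrable.of_bound (GG_cont i k).aestronglyMeasurable 1 (.of_forall fun x => GG_le i k x)

lemma cross (hL : 0 ≤ L) (hsg : ∀ k c, |sg k c| ≤ 1) (k : ℕ) (i) {a} (ha : a ∈ grid k) :
    ∫ x in cell k a, DD L sg k x i * GG i k x ∂uniformQsquare ≤ 4 * π * (4 ^ k)⁻¹ ∧
    -(4 * π * (4 ^ k)⁻¹) ≤ ∫ x in cell k a, DD L sg k x i * GG i k x ∂uniformQsquare := by
  rw [and_comm, ← abs_le]
  by_cases hne : (cell k a).Nonempty
  swap
  · rw [Set.not_nonempty_iff_eq_empty.1 hne]; simp; positivity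
  obtain ⟨x0, hx0⟩ := hne
  have hint : Integrable (fun x => DD L sg k x i * GG i k x) (uniformQsquare.restrict (cell k a)) :=
    (DD_int hL hsg k i _).mul_bdd (c := 1) (GG_cont i k).aestronglyMeasurable
      (.of_forall fun x => GG_le i k x)
  have e : ∫ x in cell k a, DD L sg k x i * GG i k x ∂uniformQsquare =
      ∫ x in cell k a, (DD L sg k x i - DD L sg k x0 i) * GG i k x ∂uniformQsquare := by
    simp_rw [sub_mul]
    rw [integral_sub hint ((GG_int k i _).const_mul _), integral_const_mul, GG_mean i ha]; simp
  rw [e, ← Real.norm_eq_abs, ← real_cell ha]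
  refine norm_setIntegral_le_of_norm_le_const (measure_lt_top _ _) ?_
  intro x hx
  rw [Real.norm_eq_abs, abs_mul]
  have := mul_le_mul (DD_osc (L := L) hsg k i (show idx k x = idx k x0 from hx.trans hx0.symm))
    (GG_le i k x) (abs_nonneg _) (by positivity)
  linarith

lemma energy (hL : 0 ≤ L) (hsg : ∀ k c, |sg k c| ≤ 1) (k : ℕ) (i) :
    ∫ x, DD L sg k x i ^ 2 ∂uniformQsquare ≤ (8 * π + 1) * k := by
  induction k with
  | zero => simp [DD]
  | succ k ih =>
    have hpt : ∀ x, DD L sg (k + 1) x i ^ 2 ≤ DD L sg k x i ^ 2 +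
        2 * (zz L sg k (idx k x) * (DD L sg k x i * GG i k x)) + 1 := by
      intro x
      rw [DD_succ]
      have h3 : |zz L sg k (idx k x) * GG i k x| ≤ 1 := by
        rw [abs_mul]
        exact mul_le_one₀ (zz_le hsg _ _) (abs_nonneg _) (GG_le _ _ _)
      have h4 := (sq_le_one_iff_abs_le_one _).2 h3
      nlinarith
    have hI : Integrable (fun x => zz L sg k (idx k x) * (DD L sg k x i * GG i k x))
        uniformQsquare := by
      refine Integrable.bdd_mul (c := 1) ?_ ?_ (.of_forall fun x => zz_le hsg _ _)
      · have := (DD_int (L := L) hL hsg k i Set.univ).mul_bdd (c := 1) (GG_cont i k).aestronglyMeasurable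
          (.of_forall fun x => GG_le i k x)
        simpa using this
      · exact ((measurable_of_countable (zz L sg k)).comp (measurable_idx k)).aestronglyMeasurable
    have hle := integral_mono (μ := uniformQsquare) (DDsq_int hL hsg (k + 1) i)
      (((DDsq_int hL hsg k i).add (hI.const_mul 2)).add (integrable_const 1)) hpt
    refine hle.trans ?_
    rw [integral_add' ((DDsq_int hL hsg k i).add (hI.const_mul 2)) (integrable_const 1),
      integral_add' (DDsq_int hL hsg k i) (hI.const_mul 2), integral_const_mul,
      integral_eq_sum_cells k _ hI]
    have hc : ∀ a ∈ grid k, ∫ x in cell k a, zz L sg k (idx k x) * (DD L sg k x i * GG i k x)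
        ∂uniformQsquare ≤ 4 * π * (4 ^ k)⁻¹ := by
      intro a ha
      rw [setIntegral_congr_fun (g := fun x => zz L sg k a * (DD L sg k x i * GG i k x))
        (measurableSet_cell k a) (fun x hx => by simp only; rw [show idx k x = a from hx])]
      rw [integral_const_mul]
      have h1 := abs_le.2 (cross (L := L) hL hsg k i ha).symm
      have h2 := mul_le_mul (zz_le (L := L) hsg k a) h1 (abs_nonneg _) (by norm_num)
      rw [← abs_mul] at h2
      linarith [le_abs_self (zz L sg k a *
        ∫ x in cell k a, DD L sg k x i * GG i k x ∂uniformQsquare)]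
    have hs := Finset.sum_le_sum hc
    rw [Finset.sum_const, card_grid, nsmul_eq_mul] at hs
    push_cast at hs ⊢
    have e : (4 : ℝ) ^ k * (4 * π * (4 ^ k)⁻¹) = 4 * π := by field_simp
    rw [e] at hs
    simp
    linarith

open Classical in
lemma bad_count (hL : 8 * π ≤ L) (hsg : ∀ k c, |sg k c| ≤ 1) (k : ℕ) :
    (((grid k).filter (Bad L sg k)).card : ℝ) * L ^ 2 ≤ 8 * (8 * π + 1) * k * 4 ^ k := by
  have hL0 : 0 ≤ L := by linarith [pi_pos]
  have hsum : Integrable (fun x => DD L sg k x 0 ^ 2 + DD L sg k x 1 ^ 2) uniformQsquare :=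
    (DDsq_int hL0 hsg k 0).add (DDsq_int hL0 hsg k 1)
  have h1 : ∫ x, (DD L sg k x 0 ^ 2 + DD L sg k x 1 ^ 2) ∂uniformQsquare ≤
      2 * (8 * π + 1) * k := by
    rw [integral_add (DDsq_int hL0 hsg k 0) (DDsq_int hL0 hsg k 1)]
    linarith [energy (L := L) hL0 hsg k 0, energy (L := L) hL0 hsg k 1]
  rw [integral_eq_sum_cells k _ hsum] at h1
  have h2 : ∑ a ∈ (grid k).filter (Bad L sg k), (L ^ 2 / 4 * (4 ^ k)⁻¹) ≤
      ∑ a ∈ grid k, ∫ x in cell k a, (DD L sg k x 0 ^ 2 + DD L sg k x 1 ^ 2) ∂uniformQsquare := by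
    refine (Finset.sum_le_sum ?_).trans (Finset.sum_le_sum_of_subset_of_nonneg
      (Finset.filter_subset _ _) ?_)
    · intro a ha
      obtain ⟨ha, y, i, hy, hbad⟩ := Finset.mem_filter.1 ha
      have hc : ∫ x in cell k a, (L ^ 2 / 4) ∂uniformQsquare = L ^ 2 / 4 * (4 ^ k)⁻¹ := by
        rw [setIntegral_const, real_cell ha, smul_eq_mul, mul_comm]
      rw [← hc]
      refine setIntegral_mono_on (integrable_const _) hsum.integrableOn (measurableSet_cell k a) ?_
      intro x hx
      have ho := DD_osc (L := L) hsg k i (show idx k y = idx k x from hy.trans hx.symm)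
      have h5 : L / 2 ≤ |DD L sg k x i| := by
        have := abs_sub_abs_le_abs_sub (DD L sg k y i) (DD L sg k x i)
        linarith
      have h6 : L ^ 2 / 4 ≤ DD L sg k x i ^ 2 := by
        rw [← sq_abs (DD L sg k x i)]
        nlinarith
      have : ∀ i : Fin 2, DD L sg k x i ^ 2 ≤ DD L sg k x 0 ^ 2 + DD L sg k x 1 ^ 2 := by
        intro i; fin_cases i <;> simp <;> positivity
      exact h6.trans (this i)
    · intro a _ _
      exact integral_nonneg fun x => by positivity
  rw [Finset.sum_const, nsmul_eq_mul] at h2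
  have h3 := h2.trans h1
  have h4 : (0 : ℝ) < 4 ^ k := by positivity
  have e : ((((grid k).filter (Bad L sg k)).card : ℝ) * (L ^ 2 / 4 * (4 ^ k)⁻¹)) * (4 * 4 ^ k)
    = (((grid k).filter (Bad L sg k)).card : ℝ) * L ^ 2 := by field_simp
  rw [← e]
  have := mul_le_mul_of_nonneg_right h3 (by positivity : (0 : ℝ) ≤ 4 * 4 ^ k)
  linarith

end

section

variable {L : ℝ} {sg : ℕ → (Fin 2 → ℤ) → ℝ}

def FF (L : ℝ) (sg : ℕ → (Fin 2 → ℤ) → ℝ) (r : ℕ) (x : Fin 2 → ℝ) : ℝ :=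
  ∑ k ∈ Finset.range r, (2 ^ k)⁻¹ * (zz L sg k (idx k x) * SS k x)

lemma floor_sin_lip (c : ℤ → ℝ) (hc : ∀ m, |c m| ≤ 1) {s t : ℝ} (hst : s ≤ t) :
    |c ⌊s / (2 * π)⌋ * sin s - c ⌊t / (2 * π)⌋ * sin t| ≤ t - s := by
  have hp := two_pi_pos'
  have hl : ∀ u v : ℝ, |sin u - sin v| ≤ |u - v| := fun u v => by
    simpa [Real.dist_eq] using Real.lipschitzWith_sin.dist_le_mul u v
  by_cases h : ⌊s / (2 * π)⌋ = ⌊t / (2 * π)⌋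
  · rw [h, ← mul_sub, abs_mul]
    have := mul_le_mul (hc ⌊t / (2 * π)⌋) (hl s t) (abs_nonneg _) zero_le_one
    rw [abs_sub_comm s t, abs_of_nonneg (by linarith : 0 ≤ t - s)] at this
    linarith
  · have h1 : ⌊s / (2 * π)⌋ ≤ ⌊t / (2 * π)⌋ := Int.floor_le_floor (by gcongr)
    have h2 : ⌊s / (2 * π)⌋ + 1 ≤ ⌊t / (2 * π)⌋ := by omega
    set m := ⌊t / (2 * π)⌋ with hm
    have h3 : s ≤ m * (2 * π) := by
      have := Int.lt_floor_add_one (s / (2 * π))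
      rw [div_lt_iff₀ hp] at this
      have h4 : ((⌊s / (2 * π)⌋ : ℝ) + 1) ≤ m := by exact_mod_cast h2
      nlinarith
    have h4 : m * (2 * π) ≤ t := by
      have := Int.floor_le (t / (2 * π))
      rwa [le_div_iff₀ hp] at this
    have h0 : sin (m * (2 * π)) = 0 := by
      have := Real.sin_int_mul_pi (2 * m)
      push_cast at this
      rw [← this]; congr 1; ring
    have a1 := hl s (m * (2 * π))
    have a2 := hl t (m * (2 * π))
    rw [h0, sub_zero] at a1 a2
    rw [abs_of_nonpos (by linarith : s - m * (2 * π) ≤ 0)] at a1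
    rw [abs_of_nonneg (by linarith : 0 ≤ t - m * (2 * π))] at a2
    refine (abs_sub _ _).trans ?_
    rw [abs_mul, abs_mul]
    have b1 := mul_le_mul (hc ⌊s / (2 * π)⌋) a1 (abs_nonneg _) zero_le_one
    have b2 := mul_le_mul (hc m) a2 (abs_nonneg _) zero_le_one
    linarith

lemma floor_sin_cont (c : ℤ → ℝ) (hc : ∀ m, |c m| ≤ 1) :
    Continuous fun s => c ⌊s / (2 * π)⌋ * sin s := by
  refine (LipschitzWith.of_dist_le_mul (K := 1) fun s t => ?_).continuous
  rw [Real.dist_eq, Real.dist_eq]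
  rcases le_total s t with h | h
  · rw [abs_sub_comm s t, abs_of_nonneg (by linarith : 0 ≤ t - s)]
    simpa using floor_sin_lip c hc h
  · rw [abs_sub_comm, abs_of_nonneg (by linarith : 0 ≤ s - t)]
    simpa using floor_sin_lip c hc h

lemma floor_ev (k : ℕ) (t : ℝ) :
    ∀ᶠ s in nhdsWithin t (Set.Ici t), ⌊th k s / (2 * π)⌋ = ⌊th k t / (2 * π)⌋ := by
  have h := (floor_iff k t _).1 rfl
  have : Set.Ico t (lo k (⌊th k t / (2 * π)⌋ + 1)) ∈ nhdsWithin t (Set.Ici t) :=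
    Ico_mem_nhdsGE h.2
  filter_upwards [this] with s hs
  exact (floor_iff k s _).2 ⟨h.1.trans hs.1, hs.2⟩

lemma th_deriv (k : ℕ) (t : ℝ) : HasDerivAt (th k) (2 ^ k) t := by
  have := ((hasDerivAt_id t).add_const π).const_mul ((2 : ℝ) ^ k)
  rw [mul_one] at this
  exact this

lemma line0 (hL : 0 ≤ L) (hsg : ∀ k c, |sg k c| ≤ 1) (r : ℕ) (u : ℝ) {s t : ℝ} (hst : s ≤ t) :
    |FF L sg r ![t, u] - FF L sg r ![s, u]| ≤ (L + 1) * (t - s) := by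
  refine norm_image_sub_le_of_norm_deriv_right_le_segment
    (f := fun v => FF L sg r ![v, u]) (f' := fun v => DD L sg r ![v, u] 0) ?_ ?_ ?_ t ⟨hst, le_rfl⟩
  · refine Continuous.continuousOn ?_
    unfold FF
    refine continuous_finsetSum _ fun k _ => ?_
    have h1 := (floor_sin_cont (fun m => zz L sg k ![m, ⌊th k u / (2 * π)⌋])
      (fun m => zz_le hsg _ _)).comp (th_cont k)
    have h2 := (h1.mul_const (sin (th k u))).const_mul ((2 : ℝ) ^ k)⁻¹
    refine h2.congr fun v => ?_
    have : idx k ![v, u] = ![⌊th k v / (2 * π)⌋, ⌊th k u / (2 * π)⌋] := by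
      funext i; fin_cases i <;> simp [idx]
    simp only [Function.comp, SS, this]
    simp
    ring
  · intro v _
    rw [DD_sum]
    unfold FF
    refine HasDerivWithinAt.fun_sum fun k _ => ?_
    have hd : HasDerivAt (fun w => (2 ^ k)⁻¹ * (zz L sg k (idx k ![v, u]) * SS k ![w, u]))
        (zz L sg k (idx k ![v, u]) * GG 0 k ![v, u]) v := by
      have := ((((hasDerivAt_sin (th k v)).comp v (th_deriv k v)).mul_const
        (sin (th k u))).const_mul (zz L sg k (idx k ![v, u]))).const_mul ((2 : ℝ) ^ k)⁻¹
      refine HasDerivAt.congr_deriv this ?_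
      simp [GG, gp, gq]
      field_simp
    refine hd.hasDerivWithinAt.congr_of_eventuallyEq ?_ rfl
    filter_upwards [floor_ev k v] with w hw
    have : idx k ![w, u] = idx k ![v, u] := by
      funext i; fin_cases i <;> simp [idx, hw]
    rw [this]
  · exact fun v _ => DD_le hL hsg r _ 0

lemma line1 (hL : 0 ≤ L) (hsg : ∀ k c, |sg k c| ≤ 1) (r : ℕ) (u : ℝ) {s t : ℝ} (hst : s ≤ t) :
    |FF L sg r ![u, t] - FF L sg r ![u, s]| ≤ (L + 1) * (t - s) := by
  refine norm_image_sub_le_of_norm_deriv_right_le_segment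
    (f := fun v => FF L sg r ![u, v]) (f' := fun v => DD L sg r ![u, v] 1) ?_ ?_ ?_ t ⟨hst, le_rfl⟩
  · refine Continuous.continuousOn ?_
    unfold FF
    refine continuous_finsetSum _ fun k _ => ?_
    have h1 := (floor_sin_cont (fun m => zz L sg k ![⌊th k u / (2 * π)⌋, m])
      (fun m => zz_le hsg _ _)).comp (th_cont k)
    have h2 := (h1.mul_const (sin (th k u))).const_mul ((2 : ℝ) ^ k)⁻¹
    refine h2.congr fun v => ?_
    have : idx k ![u, v] = ![⌊th k u / (2 * π)⌋, ⌊th k v / (2 * π)⌋] := by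
      funext i; fin_cases i <;> simp [idx]
    simp only [Function.comp, SS, this]
    simp
    ring
  · intro v _
    rw [DD_sum]
    unfold FF
    refine HasDerivWithinAt.fun_sum fun k _ => ?_
    have hd : HasDerivAt (fun w => (2 ^ k)⁻¹ * (zz L sg k (idx k ![u, v]) * SS k ![u, w]))
        (zz L sg k (idx k ![u, v]) * GG 1 k ![u, v]) v := by
      have := ((((hasDerivAt_sin (th k v)).comp v (th_deriv k v)).const_mul
        (sin (th k u))).const_mul (zz L sg k (idx k ![u, v]))).const_mul ((2 : ℝ) ^ k)⁻¹
      refine HasDerivAt.congr_deriv this ?_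
      simp [GG, gp, gq]
      field_simp
    refine hd.hasDerivWithinAt.congr_of_eventuallyEq ?_ rfl
    filter_upwards [floor_ev k v] with w hw
    have : idx k ![u, w] = idx k ![u, v] := by
      funext i; fin_cases i <;> simp [idx, hw]
    rw [this]
  · exact fun v _ => DD_le hL hsg r _ 1

lemma sin_th_pi (k : ℕ) : sin (th k π) = 0 := by
  have := Real.sin_int_mul_pi (2 ^ k * 2)
  push_cast at this
  rw [← this]; congr 1; unfold th; ring

lemma sin_th_neg (k : ℕ) : sin (th k (-π)) = 0 := by simp [th]

lemma FF_zero (r : ℕ) (x : Fin 2 → ℝ) (h : ∃ i, x i = π ∨ x i = -π) : FF L sg r x = 0 := by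
  unfold FF
  refine Finset.sum_eq_zero fun k _ => ?_
  have : SS k x = 0 := by
    obtain ⟨i, hi⟩ := h
    unfold SS
    fin_cases i <;> rcases hi with hi | hi <;> simp at hi <;> simp [hi, sin_th_pi, sin_th_neg]
  rw [this]; ring

lemma circle_lip {g : ℝ → ℝ} {M : ℝ} (hM : 0 ≤ M)
    (hg : ∀ s t, s ≤ t → |g t - g s| ≤ M * (t - s)) (h1 : g π = 0) (h2 : g (-π) = 0)
    {s t : ℝ} (hs : s ∈ Set.Ioc (-π) π) (ht : t ∈ Set.Ioc (-π) π) :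
    |g s - g t| ≤ M * rhoCircle s t := by
  wlog hst : s ≤ t generalizing s t
  · have := this ht hs (le_of_not_ge hst)
    rw [abs_sub_comm]
    refine this.trans (le_of_eq ?_)
    unfold rhoCircle
    rw [abs_sub_comm]
  unfold rhoCircle
  rw [abs_sub_comm s t, abs_of_nonneg (by linarith : 0 ≤ t - s), mul_min_of_nonneg _ _ hM]
  refine le_min ?_ ?_
  · rw [abs_sub_comm]; exact hg s t hst
  · have a := hg (-π) s hs.1.le
    have b := hg t π ht.2
    rw [h2, sub_zero] at a
    rw [h1, zero_sub, abs_neg] at b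
    refine (abs_sub _ _).trans ?_
    linarith

lemma FF_torus (hL : 0 ≤ L) (hsg : ∀ k c, |sg k c| ≤ 1) (r : ℕ) {x y : Fin 2 → ℝ}
    (hx : x ∈ Qsquare) (hy : y ∈ Qsquare) :
    |FF L sg r x - FF L sg r y| ≤ 2 * (L + 1) * rhoTorus x y := by
  have ex : x = ![x 0, x 1] := by funext i; fin_cases i <;> simp
  have ey : y = ![y 0, y 1] := by funext i; fin_cases i <;> simp
  have hM : 0 ≤ L + 1 := by linarith
  have h0 : |FF L sg r ![x 0, x 1] - FF L sg r ![y 0, x 1]| ≤ (L + 1) * rhoCircle (x 0) (y 0) :=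
    circle_lip (g := fun v => FF L sg r ![v, x 1]) hM (fun s t h => line0 hL hsg r _ h)
      (FF_zero r _ ⟨0, by simp⟩) (FF_zero r _ ⟨0, by simp⟩) (hx 0) (hy 0)
  have h1 : |FF L sg r ![y 0, x 1] - FF L sg r ![y 0, y 1]| ≤ (L + 1) * rhoCircle (x 1) (y 1) :=
    circle_lip (g := fun v => FF L sg r ![y 0, v]) hM (fun s t h => line1 hL hsg r _ h)
      (FF_zero r _ ⟨1, by simp⟩) (FF_zero r _ ⟨1, by simp⟩) (hx 1) (hy 1)
  have hr : ∀ i, rhoCircle (x i) (y i) ≤ rhoTorus x y := by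
    intro i
    unfold rhoTorus
    refine (le_abs_self _).trans ?_
    rw [← Real.sqrt_sq_eq_abs]
    exact Real.sqrt_le_sqrt (Finset.single_le_sum (f := fun i => rhoCircle (x i) (y i) ^ 2)
      (fun i _ => sq_nonneg _) (Finset.mem_univ i))
  rw [← ex] at h0
  rw [← ey] at h1
  have h3 := abs_sub_le (FF L sg r x) (FF L sg r ![y 0, x 1]) (FF L sg r y)
  have h4 := mul_le_mul_of_nonneg_left (hr 0) hM
  have h5 := mul_le_mul_of_nonneg_left (hr 1) hM
  linarith

lemma FF_meas (r : ℕ) : Measurable (FF L sg r) := by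
  unfold FF
  refine Finset.measurable_sum _ fun j _ => Measurable.const_mul (Measurable.mul ?_ (SS_cont j).measurable) _
  exact (measurable_of_countable (zz L sg j)).comp (measurable_idx j)

lemma FF_bdd (hsg : ∀ k c, |sg k c| ≤ 1) (r : ℕ) (x) : |FF L sg r x| ≤ r := by
  unfold FF
  refine (Finset.abs_sum_le_sum_abs _ _).trans ?_
  refine (Finset.sum_le_sum (g := fun _ => (1 : ℝ)) fun k _ => ?_).trans (by simp)
  rw [abs_mul, abs_mul, abs_of_nonneg (by positivity)]
  have : ((2 : ℝ) ^ k)⁻¹ ≤ 1 := inv_le_one_of_one_le₀ (one_le_pow₀ (by norm_num))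
  exact mul_le_one₀ this (by positivity)
    (mul_le_one₀ (zz_le hsg _ _) (abs_nonneg _) (SS_le _ _))

/-- duality -/
lemma W1_ge {n : ℕ} (hn : 0 < n) {Ω : Type} [MeasurableSpace Ω] (X Y : Fin n → Ω → (Fin 2 → ℝ))
    (ω : Ω) (hX : ∀ i, X i ω ∈ Qsquare) (hY : ∀ i, Y i ω ∈ Qsquare) {F : (Fin 2 → ℝ) → ℝ} {M B : ℝ}
    (hM : 0 < M) (hF : Measurable F) (hB : ∀ x, |F x| ≤ B)
    (hlip : ∀ x ∈ Qsquare, ∀ y ∈ Qsquare, |F x - F y| ≤ M * rhoTorus x y) :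
    ENNReal.ofReal ((n * M)⁻¹ * ∑ i, (F (X i ω) - F (Y i ω))) ≤
      W1tilde (empMeasure X ω) (empMeasure Y ω) := by
  have hQ : MeasurableSet Qsquare := by
    rw [Qsquare_eq]; exact MeasurableSet.univ_pi fun _ => measurableSet_Ioc
  have hprob : ∀ X : Fin n → Ω → (Fin 2 → ℝ), IsProbabilityMeasure (empMeasure X ω) := by
    intro X
    constructor
    simp [empMeasure]
    exact ENNReal.inv_mul_cancel (by simp; omega) (by simp)
  have hint : ∀ X : Fin n → Ω → (Fin 2 → ℝ), ∫ x, F x ∂(empMeasure X ω) =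
      (n : ℝ)⁻¹ * ∑ i, F (X i ω) := by
    intro X
    rw [empMeasure, integral_smul_measure, integral_finsetSum_measure]
    · simp [integral_dirac' _ _ hF.stronglyMeasurable]
    · intro i _
      exact Integrable.of_bound hF.aestronglyMeasurable B (.of_forall hB)
  have haeQ : ∀ X : Fin n → Ω → (Fin 2 → ℝ), (∀ i, X i ω ∈ Qsquare) →
      ∀ᵐ x ∂(empMeasure X ω), x ∈ Qsquare := by
    intro X hX
    rw [ae_iff, empMeasure]
    simp only [Measure.smul_apply, Measure.finsetSum_apply, smul_eq_mul]
    rw [Finset.sum_eq_zero, mul_zero]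
    intro i _
    refine (Measure.dirac_apply' (X i ω) hQ.compl).trans ?_
    simp [hX i]
  refine le_iInf₂ fun γ hγ => ?_
  have : IsProbabilityMeasure γ := by
    have h1 := hprob X
    constructor
    rw [← h1.measure_univ, ← hγ.1, Measure.map_apply measurable_fst MeasurableSet.univ]; simp
  have i1 : Integrable (fun p : (Fin 2 → ℝ) × (Fin 2 → ℝ) => F p.1) γ :=
    Integrable.of_bound (hF.comp measurable_fst).aestronglyMeasurable B (.of_forall fun p => hB _)
  have i2 : Integrable (fun p : (Fin 2 → ℝ) × (Fin 2 → ℝ) => F p.2) γ :=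
    Integrable.of_bound (hF.comp measurable_snd).aestronglyMeasurable B (.of_forall fun p => hB _)
  have e1 : ∫ p, F p.1 ∂γ = (n : ℝ)⁻¹ * ∑ i, F (X i ω) := by
    rw [← hint X, ← hγ.1, integral_map measurable_fst.aemeasurable hF.aestronglyMeasurable]
  have e2 : ∫ p, F p.2 ∂γ = (n : ℝ)⁻¹ * ∑ i, F (Y i ω) := by
    rw [← hint Y, ← hγ.2, integral_map measurable_snd.aemeasurable hF.aestronglyMeasurable]
  have e3 : (n * M)⁻¹ * ∑ i, (F (X i ω) - F (Y i ω)) = ∫ p, M⁻¹ * (F p.1 - F p.2) ∂γ := by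
    rw [integral_const_mul, integral_sub i1 i2, e1, e2, Finset.sum_sub_distrib, mul_inv]
    ring
  have q1 : ∀ᵐ p ∂γ, p.1 ∈ Qsquare := by
    have := haeQ X hX
    rw [← hγ.1] at this
    exact ae_of_ae_map measurable_fst.aemeasurable this
  have q2 : ∀ᵐ p ∂γ, p.2 ∈ Qsquare := by
    have := haeQ Y hY
    rw [← hγ.2] at this
    exact ae_of_ae_map measurable_snd.aemeasurable this
  rw [e3]
  calc ENNReal.ofReal (∫ p, M⁻¹ * (F p.1 - F p.2) ∂γ)
      ≤ ENNReal.ofReal (∫ p, |M⁻¹ * (F p.1 - F p.2)| ∂γ) := by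
        refine ENNReal.ofReal_le_ofReal (integral_mono ((i1.sub i2).const_mul _)
          ((i1.sub i2).const_mul _).abs fun p => le_abs_self _)
    _ = ∫⁻ p, ENNReal.ofReal |M⁻¹ * (F p.1 - F p.2)| ∂γ :=
        ofReal_integral_eq_lintegral_ofReal ((i1.sub i2).const_mul _).abs
          (.of_forall fun p => abs_nonneg _)
    _ ≤ _ := by
        refine lintegral_mono_ae ?_
        filter_upwards [q1, q2] with p h1 h2
        refine ENNReal.ofReal_le_ofReal ?_
        rw [abs_mul, abs_of_pos (inv_pos.2 hM), inv_mul_le_iff₀ hM]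
        exact hlip _ h1 _ h2

end

section

set_option linter.unusedSectionVars false

/-- characteristic function bound -/
lemma chi_bound {μ : Measure (Fin 2 → ℝ)} [IsProbabilityMeasure μ] {ψ : (Fin 2 → ℝ) → ℝ}
    (hm : Measurable ψ) (hb : ∀ x, |ψ x| ≤ 1) (h0 : ∫ x, ψ x ∂μ = 0) {v : ℝ}
    (hv : ∫ x, ψ x ^ 2 ∂μ = v) {s : ℝ} (hs : |s| ≤ 1) :
    ‖∫ x, Complex.exp ((s * ψ x : ℝ) * Complex.I) ∂μ‖ ^ 2 ≤ 1 - s ^ 2 * v / 5 := by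
  have hs2 : s ^ 2 ≤ 1 := (sq_le_one_iff_abs_le_one s).2 hs
  have hψ2 : ∀ x, ψ x ^ 2 ≤ 1 := fun x => (sq_le_one_iff_abs_le_one _).2 (hb x)
  have isq : Integrable (fun x => ψ x ^ 2) μ :=
    Integrable.of_bound (hm.pow_const 2).aestronglyMeasurable 1 (.of_forall fun x => by
      rw [Real.norm_eq_abs, abs_of_nonneg (sq_nonneg _)]; exact hψ2 x)
  have iψ : Integrable ψ μ := Integrable.of_bound hm.aestronglyMeasurable 1 (.of_forall hb)
  have hv0 : 0 ≤ v := by rw [← hv]; exact integral_nonneg fun x => sq_nonneg _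
  have hv1 : v ≤ 1 := by
    rw [← hv]
    have := integral_mono isq (integrable_const (1 : ℝ)) hψ2
    simpa using this
  have hsp : ∀ x, |s * ψ x| ≤ 1 := fun x => by
    rw [abs_mul]; exact mul_le_one₀ hs (abs_nonneg _) (hb x)
  have icos : Integrable (fun x => cos (s * ψ x)) μ :=
    Integrable.of_bound (by fun_prop) 1 (.of_forall fun x => abs_cos_le_one _)
  have isin : Integrable (fun x => sin (s * ψ x)) μ :=
    Integrable.of_bound (by fun_prop) 1 (.of_forall fun x => abs_sin_le_one _)
  have iexp : Integrable (fun x => Complex.exp ((s * ψ x : ℝ) * Complex.I)) μ :=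
    Integrable.of_bound (by fun_prop) 1 (.of_forall fun x => by
      rw [Complex.norm_exp_ofReal_mul_I])
  have hre : (∫ x, Complex.exp ((s * ψ x : ℝ) * Complex.I) ∂μ).re = ∫ x, cos (s * ψ x) ∂μ := by
    have := integral_re iexp
    simp only [RCLike.re_to_complex] at this
    rw [← this]
    simp_rw [Complex.exp_ofReal_mul_I_re]
  have him : (∫ x, Complex.exp ((s * ψ x : ℝ) * Complex.I) ∂μ).im = ∫ x, sin (s * ψ x) ∂μ := by
    have := integral_im iexp
    simp only [RCLike.im_to_complex] at this
    rw [← this]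
    simp_rw [Complex.exp_ofReal_mul_I_im]
  rw [Complex.sq_norm, Complex.normSq_apply, hre, him]
  set w := s ^ 2 * v with hw
  have hw0 : 0 ≤ w := by positivity
  have hw1 : w ≤ 1 := mul_le_one₀ hs2 hv0 hv1
  have c1 : ∫ x, cos (s * ψ x) ∂μ ≤ 1 - w / 5 := by
    have : ∀ x, cos (s * ψ x) ≤ 1 - s ^ 2 / 5 * ψ x ^ 2 := by
      intro x
      have h1 := cos_le_one_sub_mul_cos_sq ((hsp x).trans (by linarith [pi_gt_three]))
      have h2 : (1 : ℝ) / 5 ≤ 2 / π ^ 2 := by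
        rw [div_le_div_iff₀ (by norm_num) (by positivity)]
        nlinarith [pi_lt_d2, pi_pos]
      have h3 := mul_le_mul_of_nonneg_right h2 (sq_nonneg (s * ψ x))
      nlinarith
    have h := integral_mono icos ((integrable_const (1 : ℝ)).sub (isq.const_mul (s ^ 2 / 5))) this
    rw [integral_sub' (integrable_const (1 : ℝ)) (isq.const_mul (s ^ 2 / 5)),
      integral_const_mul, hv] at h
    simp at h
    rw [hw]; linarith
  have c2 : 0 ≤ ∫ x, cos (s * ψ x) ∂μ := by
    refine integral_nonneg fun x => ?_
    have := one_sub_sq_div_two_le_cos (x := s * ψ x)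
    have h2 := (sq_le_one_iff_abs_le_one _).2 (hsp x)
    simp only [Pi.zero_apply]
    linarith
  have c3 : |∫ x, sin (s * ψ x) ∂μ| ≤ w / 6 := by
    have e : ∫ x, sin (s * ψ x) ∂μ = ∫ x, (sin (s * ψ x) - s * ψ x) ∂μ := by
      rw [integral_sub isin (iψ.const_mul s), integral_const_mul, h0]; simp
    rw [e]
    have h1 := norm_integral_le_integral_norm (μ := μ) (fun x => sin (s * ψ x) - s * ψ x)
    refine h1.trans ?_
    have h2 : ∀ x, ‖sin (s * ψ x) - s * ψ x‖ ≤ s ^ 2 / 6 * ψ x ^ 2 := by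
      intro x
      rw [Real.norm_eq_abs, abs_sub_comm]
      refine (abs_sub_sin_le _).trans ?_
      have : |s * ψ x| ^ 3 ≤ |s * ψ x| ^ 2 := pow_le_pow_of_le_one (abs_nonneg _) (hsp x) (by norm_num)
      rw [sq_abs] at this
      nlinarith
    have := integral_mono (isin.sub (iψ.const_mul s)).norm (isq.const_mul (s ^ 2 / 6)) h2
    refine this.trans (le_of_eq ?_)
    rw [integral_const_mul, hv, hw]; ring
  have c4 : (∫ x, cos (s * ψ x) ∂μ) * (∫ x, cos (s * ψ x) ∂μ) ≤ (1 - w / 5) * (1 - w / 5) :=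
    mul_le_mul c1 c1 c2 (by linarith)
  have c5 : (∫ x, sin (s * ψ x) ∂μ) * (∫ x, sin (s * ψ x) ∂μ) ≤ (w / 6) * (w / 6) := by
    rw [← abs_mul_abs_self]
    exact mul_le_mul c3 c3 (abs_nonneg _) (by positivity)
  nlinarith

variable {ι : Type} [Fintype ι] {Ω : Type} [MeasurableSpace Ω] {P : Measure Ω}
  [IsProbabilityMeasure P] {Z : ι → Ω → (Fin 2 → ℝ)} {μ : Measure (Fin 2 → ℝ)}
  [IsProbabilityMeasure μ] {ψ : (Fin 2 → ℝ) → ℝ} {e : ι → ℝ}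

lemma T_meas (hZm : ∀ j, AEMeasurable (Z j) P) (hm : Measurable ψ) :
    AEStronglyMeasurable (fun ω => ∑ j, e j * ψ (Z j ω)) P := by
  refine Finset.aestronglyMeasurable_fun_sum _ fun j _ => ?_
  exact ((hm.comp_aemeasurable (hZm j)).const_mul (e j)).aestronglyMeasurable

lemma T_bdd (he : ∀ j, |e j| = 1) (hb : ∀ x, |ψ x| ≤ 1) (ω : Ω) :
    |∑ j, e j * ψ (Z j ω)| ≤ Fintype.card ι := by
  refine (Finset.abs_sum_le_sum_abs _ _).trans ?_
  refine (Finset.sum_le_sum (g := fun _ => (1 : ℝ)) fun j _ => ?_).trans (by simp)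
  rw [abs_mul, he, one_mul]; exact hb _

lemma T_sq (hind : iIndepFun Z P) (hZm : ∀ j, AEMeasurable (Z j) P) (hmap : ∀ j, P.map (Z j) = μ)
    (he : ∀ j, |e j| = 1)
    (hm : Measurable ψ) (hb : ∀ x, |ψ x| ≤ 1) (h0 : ∫ x, ψ x ∂μ = 0) {v : ℝ}
    (hv : ∫ x, ψ x ^ 2 ∂μ = v) :
    ∫ ω, (∑ j, e j * ψ (Z j ω)) ^ 2 ∂P = Fintype.card ι * v := by
  have hmem : ∀ j ∈ Finset.univ, MemLp (fun ω => e j * ψ (Z j ω)) 2 P := by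
    intro j _
    refine MemLp.of_bound ((hm.comp_aemeasurable (hZm j)).const_mul (e j)).aestronglyMeasurable 1
      (.of_forall fun ω => ?_)
    rw [Real.norm_eq_abs, abs_mul, he, one_mul]; exact hb _
  have hpair : Set.Pairwise (↑(Finset.univ : Finset ι)) fun i j =>
      IndepFun (fun ω => e i * ψ (Z i ω)) (fun ω => e j * ψ (Z j ω)) P := by
    intro i _ j _ hij
    exact (hind.indepFun hij).comp (hm.const_mul (e i)) (hm.const_mul (e j))
  have hmean : ∀ j, ∫ ω, e j * ψ (Z j ω) ∂P = 0 := by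
    intro j
    rw [integral_const_mul, ← integral_map (hZm j) hm.aestronglyMeasurable, hmap, h0, mul_zero]
  have h := IndepFun.variance_sum hmem hpair
  have e1 : (∑ j, fun ω => e j * ψ (Z j ω)) = fun ω => ∑ j, e j * ψ (Z j ω) := by
    funext ω; simp
  rw [e1, variance_of_integral_eq_zero (T_meas hZm hm).aemeasurable] at h
  · rw [h]
    have : ∀ j ∈ Finset.univ, variance (fun ω => e j * ψ (Z j ω)) P = v := by
      intro j hj
      rw [variance_of_integral_eq_zero (hmem j hj).aestronglyMeasurable.aemeasurable (hmean j)]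
      have : ∀ ω, (e j * ψ (Z j ω)) ^ 2 = ψ (Z j ω) ^ 2 := by
        intro ω; rw [mul_pow, ← sq_abs (e j), he]; ring
      simp_rw [this]
      rw [← hv, ← hmap j, integral_map (hZm j) (hm.pow_const 2).aestronglyMeasurable]
    rw [Finset.sum_congr rfl this]; simp
  · rw [integral_finsetSum _ fun j hj => (hmem j hj).integrable (by norm_num)]
    exact Finset.sum_eq_zero fun j _ => hmean j

lemma T_abs (hind : iIndepFun Z P) (hZm : ∀ j, AEMeasurable (Z j) P) (hmap : ∀ j, P.map (Z j) = μ)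
    (he : ∀ j, |e j| = 1)
    (hm : Measurable ψ) (hb : ∀ x, |ψ x| ≤ 1) (h0 : ∫ x, ψ x ∂μ = 0) {v : ℝ}
    (hv : ∫ x, ψ x ^ 2 ∂μ = v) {n : ℕ} (hn : Fintype.card ι = n + n) {t : ℝ} (ht : 0 < t)
    (ht1 : t ≤ 1) :
    t⁻¹ * (1 - exp (-(n * (t ^ 2 * v / 5)))) ≤ ∫ ω, |∑ j, e j * ψ (Z j ω)| ∂P := by
  set T : Ω → ℝ := fun ω => ∑ j, e j * ψ (Z j ω) with hT
  have hTm : AEStronglyMeasurable T P := T_meas hZm hm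
  have iT : Integrable T P := Integrable.of_bound hTm _ (.of_forall fun ω => T_bdd he hb ω)
  have hTc : AEStronglyMeasurable (fun ω => Complex.exp ((t * T ω : ℝ) * Complex.I)) P := by
    have : Continuous fun y : ℝ => Complex.exp ((t * y : ℝ) * Complex.I) := by fun_prop
    exact this.comp_aestronglyMeasurable hTm
  have icos : Integrable (fun ω => cos (t * T ω)) P := by
    have : Continuous fun y : ℝ => cos (t * y) := by fun_prop
    exact Integrable.of_bound (this.comp_aestronglyMeasurable hTm) 1
      (.of_forall fun x => abs_cos_le_one _)
  have iexp : Integrable (fun ω => Complex.exp ((t * T ω : ℝ) * Complex.I)) P :=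
    Integrable.of_bound hTc 1 (.of_forall fun x => by rw [Complex.norm_exp_ofReal_mul_I])
  have hre : (∫ x, Complex.exp ((t * T x : ℝ) * Complex.I) ∂P).re = ∫ x, cos (t * T x) ∂P := by
    have := integral_re iexp
    simp only [RCLike.re_to_complex] at this
    rw [← this]
    simp_rw [Complex.exp_ofReal_mul_I_re]
  have hmf : ∀ j, Measurable (fun x => Complex.exp (((t * e j) * ψ x : ℝ) * Complex.I)) := by
    intro j; fun_prop
  have hprod : ∫ x, Complex.exp ((t * T x : ℝ) * Complex.I) ∂P =
      ∏ j, ∫ x, Complex.exp (((t * e j) * ψ x : ℝ) * Complex.I) ∂μ := by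
    have h1 := hind.integral_fun_prod_comp (𝕜 := ℂ)
      (f := fun j x => Complex.exp (((t * e j) * ψ x : ℝ) * Complex.I)) hZm
      (fun j => (hmf j).aestronglyMeasurable)
    have h2 : ∀ j, ∫ ω, Complex.exp (((t * e j) * ψ (Z j ω) : ℝ) * Complex.I) ∂P =
        ∫ x, Complex.exp (((t * e j) * ψ x : ℝ) * Complex.I) ∂μ := by
      intro j
      rw [← hmap j, integral_map (hZm j) (hmf j).aestronglyMeasurable]
    rw [Finset.prod_congr rfl fun j _ => h2 j] at h1
    rw [← h1]
    congr 1
    funext ω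
    rw [← Complex.exp_sum, hT]
    congr 1
    push_cast
    rw [Finset.mul_sum, Finset.sum_mul]
    exact Finset.sum_congr rfl fun j _ => by ring
  have hq : ∀ j, ‖∫ x, Complex.exp (((t * e j) * ψ x : ℝ) * Complex.I) ∂μ‖ ^ 2 ≤
      1 - t ^ 2 * v / 5 := by
    intro j
    have h1 : |t * e j| ≤ 1 := by rw [abs_mul, he, mul_one, abs_of_pos ht]; exact ht1
    have h2 := chi_bound hm hb h0 hv h1
    have h3 : (t * e j) ^ 2 = t ^ 2 := by rw [mul_pow, ← sq_abs (e j), he]; ring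
    rwa [h3] at h2
  have hq0 : 0 ≤ 1 - t ^ 2 * v / 5 := by
    by_cases hc : Nonempty ι
    · obtain ⟨j⟩ := hc
      exact (sq_nonneg _).trans (hq j)
    · have hv1 : v ≤ 1 := by
        rw [← hv]
        have isq : Integrable (fun x => ψ x ^ 2) μ :=
          Integrable.of_bound (hm.pow_const 2).aestronglyMeasurable 1 (.of_forall fun x => by
            rw [Real.norm_eq_abs, abs_of_nonneg (sq_nonneg _)]
            exact (sq_le_one_iff_abs_le_one _).2 (hb x))
        have := integral_mono isq (integrable_const (1 : ℝ))
          (fun x => (sq_le_one_iff_abs_le_one _).2 (hb x))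
        simpa using this
      nlinarith
  have hcos : ∫ x, cos (t * T x) ∂P ≤ (1 - t ^ 2 * v / 5) ^ n := by
    rw [← hre]
    refine (Complex.re_le_norm _).trans ?_
    refine (pow_le_pow_iff_left₀ (norm_nonneg _) (by positivity) two_ne_zero).1 ?_
    rw [hprod, norm_prod, ← Finset.prod_pow]
    refine (Finset.prod_le_prod (fun j _ => sq_nonneg _) fun j _ => hq j).trans ?_
    rw [Finset.prod_const, Finset.card_univ, hn, ← pow_mul]
    exact le_of_eq (by congr 1; ring)
  have hexp : (1 - t ^ 2 * v / 5) ^ n ≤ exp (-(n * (t ^ 2 * v / 5))) := by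
    have := Real.one_sub_le_exp_neg (t ^ 2 * v / 5)
    refine (pow_le_pow_left₀ hq0 this n).trans (le_of_eq ?_)
    rw [← Real.exp_nat_mul]; congr 1; ring
  have hpt : ∀ ω, 1 - cos (t * T ω) ≤ t * |T ω| := by
    intro ω
    have h1 := Real.abs_cos_sub_cos_le 0 (t * T ω)
    rw [cos_zero, zero_sub, abs_neg, abs_mul, abs_of_pos ht] at h1
    exact (le_abs_self _).trans h1
  have hfin := integral_mono ((integrable_const (1 : ℝ)).sub icos) (iT.abs.const_mul t) hpt
  rw [integral_sub' (integrable_const (1 : ℝ)) icos, integral_const_mul] at hfin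
  simp at hfin
  rw [inv_mul_le_iff₀ ht]
  linarith

def psi (k : ℕ) (a : Fin 2 → ℤ) : (Fin 2 → ℝ) → ℝ := (cell k a).indicator (SS k)

lemma psi_meas (k a) : Measurable (psi k a) :=
  (SS_cont k).measurable.indicator (measurableSet_cell k a)

lemma psi_le (k a x) : |psi k a x| ≤ 1 := by
  unfold psi
  by_cases h : x ∈ cell k a
  · rw [Set.indicator_of_mem h]; exact SS_le k x
  · rw [Set.indicator_of_notMem h]; simp

lemma psi_mean {k a} (ha : a ∈ grid k) : ∫ x, psi k a x ∂uniformQsquare = 0 := by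
  unfold psi
  rw [integral_indicator (measurableSet_cell k a), SS_mean ha]

lemma psi_sq {k a} (ha : a ∈ grid k) :
    ∫ x, psi k a x ^ 2 ∂uniformQsquare = (4 ^ k)⁻¹ / 4 := by
  have : ∀ x, psi k a x ^ 2 = (cell k a).indicator (fun x => SS k x ^ 2) x := by
    intro x
    unfold psi
    by_cases h : x ∈ cell k a
    · rw [Set.indicator_of_mem h, Set.indicator_of_mem h]
    · rw [Set.indicator_of_notMem h, Set.indicator_of_notMem h]; simp
  simp_rw [this]
  rw [integral_indicator (measurableSet_cell k a), SS_sq ha]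

end

variable {L : ℝ} {sg : ℕ → (Fin 2 → ℤ) → ℝ}

lemma FF_psi (r : ℕ) {x : Fin 2 → ℝ} (hx : x ∈ Qsquare) :
    FF L sg r x = ∑ k ∈ Finset.range r, (2 ^ k)⁻¹ * ∑ a ∈ grid k, zz L sg k a * psi k a x := by
  unfold FF
  refine Finset.sum_congr rfl fun k _ => ?_
  congr 1
  by_cases h : idx k x ∈ grid k
  · rw [Finset.sum_eq_single_of_mem _ h]
    · rw [psi, Set.indicator_of_mem (show x ∈ cell k (idx k x) from rfl)]
    · intro b _ hb
      have hnot : x ∉ cell k b := fun hc => hb (show idx k x = b from hc).symm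
      rw [psi, Set.indicator_of_notMem hnot, mul_zero]
  · rw [Finset.sum_eq_zero]
    · have : ∃ i, x i = π := by
        by_contra hne
        push Not at hne
        refine h (Fintype.mem_piFinset.2 fun i => ?_)
        have h1 := hx i
        have h2 : x i < π := lt_of_le_of_ne h1.2 (hne i)
        have hp := two_pi_pos'
        have h3 : (0 : ℝ) < 2 ^ k := by positivity
        rw [Finset.mem_Ico]
        constructor
        · refine Int.floor_nonneg.2 ?_
          have : 0 ≤ x i + π := by linarith [h1.1]
          unfold th; positivity
        · refine Int.floor_lt.2 ?_
          rw [div_lt_iff₀ hp]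
          unfold th
          push_cast
          have : x i + π < 2 * π := by linarith
          gcongr
      obtain ⟨i, hi⟩ := this
      have : SS k x = 0 := by
        unfold SS
        fin_cases i <;> simp at hi <;> simp [hi, sin_th_pi]
      rw [this, mul_zero]
    · intro b hb
      have hnot : x ∉ cell k b := fun hc => h (by rw [show idx k x = b from hc]; exact hb)
      rw [psi, Set.indicator_of_notMem hnot, mul_zero]

/-- The deterministic lower bound. -/
lemma det_bound {n r : ℕ} (hn : 0 < n) (hr : 0 < r) {δ : ℝ} (hδ : 0 < δ) (hδ1 : δ ≤ 1)
    {Ω : Type} [MeasurableSpace Ω] (X Y : Fin n → Ω → (Fin 2 → ℝ))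
    (ω : Ω) (hX : ∀ i, X i ω ∈ Qsquare) (hY : ∀ i, Y i ω ∈ Qsquare)
    (T : ℕ → (Fin 2 → ℤ) → ℝ) (hT : ∀ k a, T k a = ∑ i, (psi k a (X i ω) - psi k a (Y i ω)))
    (lam : ℕ → ℝ) (hlam : ∀ k, 0 < lam k) (A : ℝ) (hA : A = 8 * π + 8 * (8 * π + 1) / δ) :
    ENNReal.ofReal ((n * (2 * (A * √r + 1)))⁻¹ * ∑ k ∈ Finset.range r, (2 ^ k)⁻¹ *
      ((∑ a ∈ grid k, (|T k a| - T k a ^ 2 / (2 * lam k))) - δ * 4 ^ k * lam k / 2)) ≤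
      W1tilde (empMeasure X ω) (empMeasure Y ω) := by
  classical
  have hpi := pi_pos
  have hq : 8 * (8 * π + 1) ≤ 8 * (8 * π + 1) / δ := by
    rw [le_div_iff₀ hδ]; nlinarith
  have hA0 : 8 * π ≤ A := by rw [hA]; linarith
  have hA1 : 1 ≤ A := by linarith
  have hA2 : 8 * (8 * π + 1) ≤ δ * A ^ 2 := by
    have h1 : 8 * (8 * π + 1) / δ ≤ A := by rw [hA]; linarith
    rw [div_le_iff₀ hδ] at h1
    nlinarith
  have hr1 : (1 : ℝ) ≤ √r := Real.one_le_sqrt.2 (by exact_mod_cast hr)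
  have hr2 : √(r : ℝ) ^ 2 = r := Real.sq_sqrt (by positivity)
  set L := A * √r with hL
  have hL1 : 8 * π ≤ L := by rw [hL]; nlinarith
  have hL0 : 0 ≤ L := by linarith
  set sg : ℕ → (Fin 2 → ℤ) → ℝ := fun k a => if 0 ≤ T k a then 1 else -1 with hsgd
  have hsg : ∀ k c, |sg k c| ≤ 1 := by
    intro k c; simp only [hsgd]; split_ifs <;> simp
  have hsT : ∀ k a, sg k a * T k a = |T k a| := by
    intro k a
    simp only [hsgd]
    split_ifs with h
    · rw [abs_of_nonneg h, one_mul]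
    · rw [abs_of_neg (not_le.1 h)]; ring
  have hW := W1_ge hn X Y ω hX hY (F := FF L sg r) (M := 2 * (L + 1)) (B := r) (by linarith)
    (FF_meas r) (FF_bdd hsg r) (fun x hx y hy => FF_torus hL0 hsg r hx hy)
  refine le_trans (ENNReal.ofReal_le_ofReal ?_) hW
  refine mul_le_mul_of_nonneg_left ?_ (by positivity)
  have e1 : ∑ i, (FF L sg r (X i ω) - FF L sg r (Y i ω)) =
      ∑ k ∈ Finset.range r, (2 ^ k)⁻¹ * ∑ a ∈ grid k, zz L sg k a * T k a := by
    have : ∀ i, FF L sg r (X i ω) - FF L sg r (Y i ω) = ∑ k ∈ Finset.range r, (2 ^ k)⁻¹ *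
        ∑ a ∈ grid k, zz L sg k a * (psi k a (X i ω) - psi k a (Y i ω)) := by
      intro i
      rw [FF_psi r (hX i), FF_psi r (hY i), ← Finset.sum_sub_distrib]
      refine Finset.sum_congr rfl fun k _ => ?_
      rw [← mul_sub, ← Finset.sum_sub_distrib]
      simp_rw [mul_sub]
    simp_rw [this]
    rw [Finset.sum_comm]
    refine Finset.sum_congr rfl fun k _ => ?_
    rw [← Finset.mul_sum, Finset.sum_comm]
    congr 1
    refine Finset.sum_congr rfl fun a _ => ?_
    rw [hT, Finset.mul_sum]
  rw [e1]
  refine Finset.sum_le_sum fun k hk => mul_le_mul_of_nonneg_left ?_ (by positivity)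
  have hk' : (k : ℝ) ≤ r := by exact_mod_cast (Finset.mem_range.1 hk).le
  have hcount : (((grid k).filter (Bad L sg k)).card : ℝ) ≤ δ * 4 ^ k := by
    have h1 := bad_count hL1 hsg k
    have h2 : L ^ 2 = A ^ 2 * r := by rw [hL, mul_pow, hr2]
    have hrpos : (0 : ℝ) < r := by exact_mod_cast hr
    have h4 : (0 : ℝ) < 4 ^ k := by positivity
    have h3 : 8 * (8 * π + 1) * k * 4 ^ k ≤ (δ * 4 ^ k) * L ^ 2 := by
      rw [h2]
      calc 8 * (8 * π + 1) * k * 4 ^ k ≤ (δ * A ^ 2) * r * 4 ^ k := by gcongr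
        _ = _ := by ring
    have hLp : 0 < L ^ 2 := by rw [h2]; positivity
    exact le_of_mul_le_mul_right (h1.trans h3) hLp
  have hterm : ∀ a ∈ grid k, (|T k a| - T k a ^ 2 / (2 * lam k)) -
      (if Bad L sg k a then lam k / 2 else 0) ≤ zz L sg k a * T k a := by
    intro a _
    have hl := hlam k
    have hsq : 0 ≤ T k a ^ 2 / (2 * lam k) := by positivity
    split_ifs with h
    · rw [zz_bad h, zero_mul]
      have e : |T k a| - T k a ^ 2 / (2 * lam k) - lam k / 2 =
          -((|T k a| - lam k) ^ 2 / (2 * lam k)) := by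
        rw [← sq_abs (T k a)]; field_simp; ring
      rw [e]
      have : 0 ≤ (|T k a| - lam k) ^ 2 / (2 * lam k) := by positivity
      linarith
    · rw [zz_good h, hsT]; linarith
  have hs := Finset.sum_le_sum hterm
  rw [Finset.sum_sub_distrib, ← Finset.sum_filter, Finset.sum_const, nsmul_eq_mul] at hs
  refine le_trans ?_ hs
  have := mul_le_mul_of_nonneg_right hcount (by linarith [hlam k] : 0 ≤ lam k / 2)
  linarith

lemma ofReal_integral_le {Ω : Type} [MeasurableSpace Ω] {P : Measure Ω} {h : Ω → ℝ}
    (hh : Integrable h P) : ENNReal.ofReal (∫ ω, h ω ∂P) ≤ ∫⁻ ω, ENNReal.ofReal (h ω) ∂P := by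
  have h1 : ∫ ω, h ω ∂P ≤ ∫ ω, max (h ω) 0 ∂P :=
    integral_mono hh hh.pos_part fun ω => le_max_left _ _
  refine (ENNReal.ofReal_le_ofReal h1).trans ?_
  rw [ofReal_integral_eq_lintegral_ofReal hh.pos_part (.of_forall fun ω => le_max_right _ _)]
  refine lintegral_mono fun ω => ?_
  rcases le_total (h ω) 0 with h' | h'
  · simp only [max_eq_right h', ENNReal.ofReal_zero]; exact zero_le
  · simp only [max_eq_left h']; exact le_rfl

def c0 : ℝ := 1 - exp (-(1 / 20))

lemma c0_pos : 0 < c0 := by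
  unfold c0
  have : exp (-(1 / 20)) < 1 := Real.exp_lt_one_iff.2 (by norm_num)
  linarith

lemma c0_le : c0 ≤ 1 := by
  unfold c0
  linarith [exp_pos (-(1 / 20 : ℝ))]

lemma main_bound {n : ℕ} (hn : 2 ≤ n) {Ω : Type} [MeasurableSpace Ω] (P : Measure Ω)
    [IsProbabilityMeasure P] (X Y : Fin n → Ω → (Fin 2 → ℝ))
    (hind : iIndepFun (Sum.elim X Y) P)
    (hX : ∀ k, P.map (X k) = uniformQsquare) (hY : ∀ k, P.map (Y k) = uniformQsquare)
    (A : ℝ) (hA : A = 8 * π + 8 * (8 * π + 1) / (c0 ^ 2 / 2)) :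
    ENNReal.ofReal (c0 / (8 * (A + 1)) * Real.sqrt (Real.log n / n))
          ≤ ∫⁻ ω, W1tilde (empMeasure X ω) (empMeasure Y ω) ∂P := by
  have hc := c0_pos
  have hc1 := c0_le
  have hn0 : (0 : ℝ) < n := by exact_mod_cast (by omega : 0 < n)
  have hA0 : 0 < A := by rw [hA]; positivity
  set r := Nat.log 4 n + 1 with hr
  have hrpos : 0 < r := by omega
  have hk4 : ∀ k ∈ Finset.range r, (4 : ℝ) ^ k ≤ n := by
    intro k hk
    have h1 : k ≤ Nat.log 4 n := by have := Finset.mem_range.1 hk; omega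
    have h2 : 4 ^ k ≤ n := (Nat.pow_le_pow_right (by norm_num) h1).trans
      (Nat.pow_log_le_self 4 (by omega))
    exact_mod_cast h2
  have hmap : ∀ j, P.map (Sum.elim X Y j) = uniformQsquare := by
    rintro (j | j)
    · exact hX j
    · exact hY j
  have hZm : ∀ j, AEMeasurable (Sum.elim X Y j) P := by
    intro j
    refine AEMeasurable.of_map_ne_zero ?_
    rw [hmap j]
    exact IsProbabilityMeasure.ne_zero _
  set e : Fin n ⊕ Fin n → ℝ := Sum.elim (fun _ => 1) (fun _ => -1) with he
  have he1 : ∀ j, |e j| = 1 := by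
    rintro (j | j) <;> simp [he]
  have hcard : Fintype.card (Fin n ⊕ Fin n) = n + n := by simp
  set T : ℕ → (Fin 2 → ℤ) → Ω → ℝ := fun k a ω => ∑ j, e j * psi k a (Sum.elim X Y j ω) with hT
  have hT' : ∀ ω k a, T k a ω = ∑ i, (psi k a (X i ω) - psi k a (Y i ω)) := by
    intro ω k a
    simp only [hT, he, Fintype.sum_sum_type, Sum.elim_inl, Sum.elim_inr]
    rw [← Finset.sum_add_distrib]
    exact Finset.sum_congr rfl fun i _ => by ring
  have hTm : ∀ k a, AEStronglyMeasurable (T k a) P := fun k a => T_meas hZm (psi_meas k a)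
  have hTb : ∀ k a ω, |T k a ω| ≤ Fintype.card (Fin n ⊕ Fin n) :=
    fun k a ω => T_bdd he1 (psi_le k a) ω
  have iT : ∀ k a, Integrable (T k a) P := fun k a =>
    Integrable.of_bound (hTm k a) _ (.of_forall (hTb k a))
  have iT2 : ∀ k a, Integrable (fun ω => T k a ω ^ 2) P := fun k a =>
    Integrable.of_bound ((hTm k a).pow 2) ((Fintype.card (Fin n ⊕ Fin n) : ℝ) ^ 2)
      (.of_forall fun ω => by
        rw [Real.norm_eq_abs, abs_pow]
        exact pow_le_pow_left₀ (abs_nonneg _) (hTb k a ω) 2)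
  have hsn : 0 < √(n : ℝ) := Real.sqrt_pos.2 hn0
  have hsn2 : √(n : ℝ) * √(n : ℝ) = n := Real.mul_self_sqrt hn0.le
  have h42 : ∀ k : ℕ, (4 : ℝ) ^ k = 2 ^ k * 2 ^ k := fun k => by rw [← mul_pow]; norm_num
  have eT2 : ∀ k, ∀ a ∈ grid k, ∫ ω, T k a ω ^ 2 ∂P = n * (4 ^ k)⁻¹ / 2 := by
    intro k a ha
    have := T_sq hind hZm hmap he1 (psi_meas k a) (psi_le k a) (psi_mean ha) (psi_sq ha)
    rw [hcard] at this
    rw [this]; push_cast; ring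
  have eT1 : ∀ k ∈ Finset.range r, ∀ a ∈ grid k, √n * (2 ^ k)⁻¹ * c0 ≤ ∫ ω, |T k a ω| ∂P := by
    intro k hk a ha
    have h2k : (0 : ℝ) < 2 ^ k := by positivity
    have ht : 0 < 2 ^ k / √(n : ℝ) := by positivity
    have ht1 : 2 ^ k / √(n : ℝ) ≤ 1 := by
      rw [div_le_one hsn]
      refine Real.le_sqrt_of_sq_le ?_
      rw [sq, ← h42]; exact hk4 k hk
    have := T_abs hind hZm hmap he1 (psi_meas k a) (psi_le k a) (psi_mean ha) (psi_sq ha)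
      hcard ht ht1
    refine le_trans (le_of_eq ?_) this
    have e1 : (n : ℝ) * ((2 ^ k / √n) ^ 2 * ((4 ^ k)⁻¹ / 4) / 5) = 1 / 20 := by
      rw [div_pow, Real.sq_sqrt hn0.le, h42]
      field_simp
      norm_num
    rw [e1, inv_div, c0]
    ring
  set lam : ℕ → ℝ := fun k => √n * (2 ^ k)⁻¹ / c0 with hlam
  have hlam0 : ∀ k, 0 < lam k := fun k => by simp only [hlam]; positivity
  set δ := c0 ^ 2 / 2 with hδ
  have hδ0 : 0 < δ := by positivity
  have hδ1 : δ ≤ 1 := by rw [hδ]; nlinarith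
  set H : Ω → ℝ := fun ω => (n * (2 * (A * √r + 1)))⁻¹ * ∑ k ∈ Finset.range r, (2 ^ k)⁻¹ *
      ((∑ a ∈ grid k, (|T k a ω| - T k a ω ^ 2 / (2 * lam k))) - δ * 4 ^ k * lam k / 2) with hH
  have haeX : ∀ j, ∀ᵐ ω ∂P, Sum.elim X Y j ω ∈ Qsquare := by
    intro j
    refine ae_of_ae_map (hZm j) ?_
    rw [hmap j, uniformQsquare]
    refine Measure.ae_smul_measure ?_ _
    refine ae_restrict_mem ?_
    rw [Qsquare_eq]; exact MeasurableSet.univ_pi fun _ => measurableSet_Ioc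
  have hle : ∫⁻ ω, ENNReal.ofReal (H ω) ∂P ≤
      ∫⁻ ω, W1tilde (empMeasure X ω) (empMeasure Y ω) ∂P := by
    refine lintegral_mono_ae ?_
    filter_upwards [ae_all_iff.2 haeX] with ω hω
    exact det_bound (by omega) hrpos hδ0 hδ1 X Y ω (fun i => hω (Sum.inl i))
      (fun i => hω (Sum.inr i)) (fun k a => T k a ω) (hT' ω) lam hlam0 A hA
  have i1 : ∀ k a, Integrable (fun ω => |T k a ω| - T k a ω ^ 2 / (2 * lam k)) P :=
    fun k a => (iT k a).abs.sub ((iT2 k a).div_const _)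
  have i2 : ∀ k, Integrable (fun ω => ∑ a ∈ grid k, (|T k a ω| - T k a ω ^ 2 / (2 * lam k))) P :=
    fun k => integrable_finsetSum _ fun a _ => i1 k a
  have i3 : ∀ k, Integrable (fun ω => (2 ^ k)⁻¹ * ((∑ a ∈ grid k,
      (|T k a ω| - T k a ω ^ 2 / (2 * lam k))) - δ * 4 ^ k * lam k / 2)) P :=
    fun k => ((i2 k).sub (integrable_const _)).const_mul _
  have iH : Integrable H P := (integrable_finsetSum _ fun k _ => i3 k).const_mul _
  refine le_trans ?_ ((ofReal_integral_le iH).trans hle)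
  refine ENNReal.ofReal_le_ofReal ?_
  have hEH : (n * (2 * (A * √r + 1)))⁻¹ * (r * (√n * c0 / 2)) ≤ ∫ ω, H ω ∂P := by
    simp only [hH]
    rw [integral_const_mul]
    refine mul_le_mul_of_nonneg_left ?_ (by positivity)
    rw [integral_finsetSum _ fun k _ => i3 k]
    have : (r : ℝ) * (√n * c0 / 2) = ∑ k ∈ Finset.range r, (√n * c0 / 2) := by simp
    rw [this]
    refine Finset.sum_le_sum fun k hk => ?_
    rw [integral_const_mul, integral_sub (i2 k) (integrable_const _),
      integral_finsetSum _ fun a _ => i1 k a]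
    have hb : ∀ a ∈ grid k, √n * (2 ^ k)⁻¹ * c0 - n * (4 ^ k)⁻¹ / 2 / (2 * lam k) ≤
        ∫ ω, (|T k a ω| - T k a ω ^ 2 / (2 * lam k)) ∂P := by
      intro a ha
      rw [integral_sub (iT k a).abs ((iT2 k a).div_const _), integral_div, eT2 k a ha]
      linarith [eT1 k hk a ha]
    have hs := Finset.sum_le_sum hb
    rw [Finset.sum_const, card_grid, nsmul_eq_mul] at hs
    have h2k : (0 : ℝ) < 2 ^ k := by positivity
    have hfin : (2 ^ k)⁻¹ * (((4 ^ k : ℕ) : ℝ) * (√n * (2 ^ k)⁻¹ * c0 -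
        n * (4 ^ k)⁻¹ / 2 / (2 * lam k)) - δ * 4 ^ k * lam k / 2) = √n * c0 / 2 := by
      simp only [hlam, hδ]
      push_cast
      rw [h42]
      have alg : ∀ s m p : ℝ, 0 < s → 0 < p → s * s = m →
          p⁻¹ * (p * p * (s * p⁻¹ * c0 - m * (p * p)⁻¹ / 2 / (2 * (s * p⁻¹ / c0))) -
            c0 ^ 2 / 2 * (p * p) * (s * p⁻¹ / c0) / 2) = s * c0 / 2 := by
        intro s m p hs hp hm
        subst hm
        field_simp
        ring
      exact alg _ _ _ hsn h2k hsn2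
    rw [← hfin]
    simp only [integral_const, probReal_univ, one_smul]
    gcongr
  refine le_trans ?_ hEH
  have hr0 : (0 : ℝ) < r := by exact_mod_cast hrpos
  have hr1 : (1 : ℝ) ≤ √r := Real.one_le_sqrt.2 (by exact_mod_cast hrpos)
  have hr2 : √(r : ℝ) * √r = r := Real.mul_self_sqrt hr0.le
  have hlog : Real.log n ≤ 4 * r := by
    have h1 : n < 4 ^ r := Nat.lt_pow_succ_log_self (by norm_num) n
    have h2 : (n : ℝ) ≤ 4 ^ r := by exact_mod_cast h1.le
    have h3 := Real.log_le_log hn0 h2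
    rw [Real.log_pow] at h3
    have h4 : Real.log 4 ≤ 4 := (Real.log_le_sub_one_of_pos (by norm_num)).trans (by norm_num)
    nlinarith
  have hsq : √(Real.log n / n) ≤ 2 * √r / √n := by
    rw [Real.sqrt_le_left (by positivity), div_pow, mul_pow, Real.sq_sqrt hn0.le,
      Real.sq_sqrt hr0.le]
    gcongr
    linarith
  calc c0 / (8 * (A + 1)) * √(Real.log n / n) ≤ c0 / (8 * (A + 1)) * (2 * √r / √n) := by gcongr
    _ = (n * (2 * ((A + 1) * √r)))⁻¹ * (r * (√n * c0 / 2)) := by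
        have alg : ∀ s m p q : ℝ, 0 < s → 0 < p → s * s = m → p * p = q →
            c0 / (8 * (A + 1)) * (2 * p / s) =
              (m * (2 * ((A + 1) * p)))⁻¹ * (q * (s * c0 / 2)) := by
          intro s m p q hs hp hm hq
          subst hm
          subst hq
          field_simp
          norm_num
        exact alg _ _ _ _ hsn (by linarith) hsn2 hr2
    _ ≤ _ := by
        gcongr
        linarith

theorem AKT_lower_bound_torus :
    ∃ c : ℝ, 0 < c ∧
      ∀ (n : ℕ), 2 ≤ n →
      ∀ (Ω : Type) (_ : MeasurableSpace Ω) (P : Measure Ω), IsProbabilityMeasure P →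
      ∀ (X Y : Fin n → Ω → (Fin 2 → ℝ)),
        iIndepFun (Sum.elim X Y) P →
        (∀ k, P.map (X k) = uniformQsquare) →
        (∀ k, P.map (Y k) = uniformQsquare) →
        ENNReal.ofReal (c * Real.sqrt (Real.log n / n))
          ≤ ∫⁻ ω, W1tilde (empMeasure X ω) (empMeasure Y ω) ∂P := by
  have hc := c0_pos
  have hA : 0 < 8 * π + 8 * (8 * π + 1) / (c0 ^ 2 / 2) := by positivity
  refine ⟨c0 / (8 * ((8 * π + 8 * (8 * π + 1) / (c0 ^ 2 / 2)) + 1)), by positivity, ?_⟩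
  intro n hn Ω _ P hP X Y hind hX hY
  exact main_bound hn P X Y hind hX hY _ rfl
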